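/- arXiv:1903.05878 — 6 statements merged into one kernel-verified Lean document; each statement's English description precedes it below -/
import Mathlib

section
/- (Predecessor Lemma for Game Paths) If U is a path from a game position u₀, then every v ∈ U with u₀ ⊏ v has an immediate predecessor in U: there exists u ∈ U with gsucc u v. -/
namespace TreeGames

variable {D P O : Type*}

/-- Strict prefix order on tree positions `x < y`. -/
def TLt (x y : List D) : Prop := x <+: y ∧ x ≠ y

/-- The relation `u ⊏ v` on game positions. -/
def Glt (u v : List D × (P ⊕ O)) : Prop :=
  TLt u.1 v.1 ∨ (u.1 = v.1 ∧ (∃ k, u.2 = Sum.inl k) ∧ (∃ l, v.2 = Sum.inr l))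

/-- The relation `u ⊑ v` on game positions. -/
def Gle (u v : List D × (P ⊕ O)) : Prop := Glt u v ∨ u = v

/-- `v` is an immediate successor of `u`. -/
def Gsucc (u v : List D × (P ⊕ O)) : Prop :=
  Glt u v ∧ ¬ ∃ w : List D × (P ⊕ O), Glt u w ∧ Glt w v

/-- `U` is a path from `u₀`. -/
def IsPath (u₀ : List D × (P ⊕ O)) (U : Set (List D × (P ⊕ O))) : Prop :=
  u₀ ∈ U ∧ (∀ v ∈ U, Gle u₀ v) ∧ (∀ v ∈ U, ∃ w ∈ U, Gsucc v w) ∧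
  (∀ v ∈ U, ∀ w ∈ U, Glt v w ∨ v = w ∨ Glt w v)

def grank (u : List D × (P ⊕ O)) : ℕ := 2 * u.1.length + (if u.2.isRight then 1 else 0)

theorem grank_lt {u v : List D × (P ⊕ O)} (h : Glt u v) : grank u < grank v := by
  unfold grank
  rcases h with ⟨h1, h2⟩ | ⟨h1, ⟨k, hk⟩, ⟨l, hl⟩⟩
  · have h3 : u.1.length < v.1.length := by
      refine lt_of_le_of_ne h1.length_le fun h => h2 (h1.eq_of_length h)
    split_ifs <;> omega
  · simp [h1, hk, hl]

theorem pred_aux (U : Set (List D × (P ⊕ O)))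
    (hs : ∀ v ∈ U, ∃ w ∈ U, Gsucc v w)
    (hc : ∀ v ∈ U, ∀ w ∈ U, Glt v w ∨ v = w ∨ Glt w v) (v) (hv : v ∈ U) :
    ∀ n : ℕ, ∀ u ∈ U, grank v - grank u ≤ n → Glt u v → ∃ u ∈ U, Gsucc u v := by
  intro n
  induction n with
  | zero =>
    intro u _ hn h
    have := grank_lt h
    omega
  | succ n ih =>
    intro u hu hn h
    obtain ⟨w, hw, hg⟩ := hs u hu
    rcases hc w hw v hv with h1 | h1 | h1
    · have h2 := grank_lt hg.1
      have h3 := grank_lt h1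
      exact ih w hw (by omega) h1
    · exact ⟨u, hu, h1 ▸ hg⟩
    · exact absurd ⟨v, h, h1⟩ hg.2

theorem predecessor_lemma_paths [Fintype D] [Nonempty D] [Fintype P] [Nonempty P]
    [Fintype O] [Nonempty O]
    (u₀ : List D × (P ⊕ O)) (U : Set (List D × (P ⊕ O))) (hU : IsPath u₀ U) :
    ∀ v ∈ U, Glt u₀ v → ∃ u ∈ U, Gsucc u v := by
  intro v hv h
  exact pred_aux U hU.2.2.1 hU.2.2.2 v hv _ u₀ hU.1 le_rfl h

end TreeGames
end

section
/- (Predecessor Lemma for Infinite Plays) If U is an infinite play of a game from a position u₀, then every v ∈ U with u₀ ⟶⁺ v has a predecessor in U: there exists u ∈ U with u ⟶ v. -/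
namespace TreeGames

variable {D P O : Type*}

/-- The edge relation of the game given by `eP`, `eO`. -/
def Edge (eP : List D × P → Set O) (eO : List D × O → Set (D × P))
    (u v : List D × (P ⊕ O)) : Prop :=
  (∃ x k l, u = (x, Sum.inl k) ∧ v = (x, Sum.inr l) ∧ l ∈ eP (x, k)) ∨
  (∃ x l d k, u = (x, Sum.inr l) ∧ v = (x ++ [d], Sum.inl k) ∧ (d, k) ∈ eO (x, l))

/-- `U` is an infinite play of the game with edge relation `r` from `u₀`. -/
def IsPlay {α : Type*} (r : α → α → Prop) (u₀ : α) (U : Set α) : Prop :=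
  u₀ ∈ U ∧ (∀ v ∈ U, Relation.ReflTransGen r u₀ v) ∧
  (∀ v ∈ U, ∃ w ∈ U, r v w) ∧
  (∀ v ∈ U, ∀ w ∈ U, Relation.TransGen r v w ∨ v = w ∨ Relation.TransGen r w v)

/-- Height of a game position. -/
def ht (u : List D × (P ⊕ O)) : ℕ := 2 * u.1.length + Sum.elim (fun _ => 0) (fun _ => 1) u.2

theorem ht_edge (eP : List D × P → Set O) (eO : List D × O → Set (D × P))
    {u v : List D × (P ⊕ O)} (h : Edge eP eO u v) : ht v = ht u + 1 := by
  rcases h with ⟨x, k, l, rfl, rfl, _⟩ | ⟨x, l, d, k, rfl, rfl, _⟩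
  · simp [ht]
  · simp [ht]; omega

theorem ht_trans (eP : List D × P → Set O) (eO : List D × O → Set (D × P))
    {u v : List D × (P ⊕ O)} (h : Relation.TransGen (Edge eP eO) u v) : ht u < ht v := by
  induction h with
  | single h => have := ht_edge eP eO h; omega
  | tail _ h ih => have := ht_edge eP eO h; omega

theorem predecessor_lemma_plays [Fintype D] [Nonempty D] [Fintype P] [Nonempty P]
    [Fintype O] [Nonempty O]
    (eP : List D × P → Set O) (eO : List D × O → Set (D × P))
    (hP : ∀ p, (eP p).Nonempty) (hO : ∀ p, (eO p).Nonempty)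
    (u₀ : List D × (P ⊕ O)) (U : Set (List D × (P ⊕ O)))
    (hU : IsPlay (Edge eP eO) u₀ U) :
    ∀ v ∈ U, Relation.TransGen (Edge eP eO) u₀ v → ∃ u ∈ U, Edge eP eO u v := by
  obtain ⟨h0, -, hs, hc⟩ := hU
  intro v hv ht0
  have key : ∀ n : ℕ, ∃ u ∈ U, ht u = ht u₀ + n := by
    intro n
    induction n with
    | zero => exact ⟨u₀, h0, rfl⟩
    | succ n ih =>
      obtain ⟨u, hu, e⟩ := ih
      obtain ⟨w, hw, hr⟩ := hs u hu
      exact ⟨w, hw, by have := ht_edge eP eO hr; omega⟩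
  have hlt := ht_trans eP eO ht0
  obtain ⟨u, hu, e⟩ := key (ht v - ht u₀ - 1)
  obtain ⟨w, hw, hr⟩ := hs u hu
  have hwv := ht_edge eP eO hr
  rcases hc w hw v hv with h | h | h
  · have := ht_trans eP eO h; omega
  · exact ⟨u, hu, h ▸ hr⟩
  · have := ht_trans eP eO h; omega

end TreeGames
end

section
/- (Disjunction) Let A₀ and A₁ be parity automata over Σ with state sets Q₀, Q₁, initial states q₀⁰, q₀¹, and colorings c₀ : Q₀ → Fin (n₀+1), c₁ : Q₁ → Fin (n₁+1). Define the parity automaton A₀ ⊕ A₁ over Σ with states Option (Q₀ ⊕ Q₁) and initial state none; its transitions are δ (none, a) = the images of the conjunctions of δ₀ (q₀⁰, a) under (d, q) ↦ (d, some (Sum.inl q)) together with the images of the conjunctions of δ₁ (q₀¹, a) under (d, q) ↦ (d, some (Sum.inr q)), δ (some (Sum.inl q), a) = the images of δ₀ (q, a), and δ (some (Sum.inr q), a) = the images of δ₁ (q, a); its coloring sends none to max n₀ n₁, some (Sum.inl q) to c₀ q and some (Sum.inr q) to c₁ q. Then for every tree F : List D → Σ: F ∈ L(A₀ ⊕ A₁)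 if and only if F ∈ L(A₀) or F ∈ L(A₁). -/
namespace TreeGames

variable {D P O : Type*}

/-- Proponent edge function of the acceptance game `G(A,F)`:
`eP (x, q) = {(q, C) | C ∈ δ (q, F x)}`. -/
def AccEP {Q A : Type*} (δ : Q × A → Set (Set (D × Q))) (F : List D → A) :
    List D × Q → Set (Q × Set (D × Q)) :=
  fun p => {w : Q × Set (D × Q) | w.1 = p.2 ∧ w.2 ∈ δ (p.2, F p.1)}

/-- Opponent edge function of the acceptance game: `eO (x, (q, C)) = C`. -/
def AccEO {Q : Type*} : List D × (Q × Set (D × Q)) → Set (D × Q) := fun p => p.2.2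

/-- Extension of a coloring of states to game positions. -/
def HatC {Q : Type*} (c : Q → ℕ) : List D × (Q ⊕ Q × Set (D × Q)) → ℕ :=
  fun u => Sum.elim c (fun w => c w.1) u.2

/-- The parity condition on a set `U` of positions of an acceptance game. -/
def Par {Q : Type*} (c : Q → ℕ) (U : Set (List D × (Q ⊕ Q × Set (D × Q)))) : Prop :=
  ∃ m : ℕ, Even m ∧ (∀ u ∈ U, ∃ v ∈ U, Glt u v ∧ HatC c v = m) ∧
    (∃ u ∈ U, ∀ v ∈ U, Glt u v → m ≤ HatC c v)

/-- The parity automaton with transitions `δ`, coloring `c` and initial state `q₀`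
accepts the input tree `F` : there is a Proponent strategy in the acceptance game
winning from the root for the parity condition. -/
def Accepts {Q A : Type*} (δ : Q × A → Set (Set (D × Q))) (c : Q → ℕ) (q₀ : Q)
    (F : List D → A) : Prop :=
  ∃ σ : List D × Q → Q × Set (D × Q),
    (∀ p, σ p ∈ AccEP δ F p) ∧
    ∀ U : Set (List D × (Q ⊕ Q × Set (D × Q))),
      IsPlay (Edge (fun p => ({σ p} : Set (Q × Set (D × Q)))) AccEO)
        ((([] : List D), Sum.inl q₀)) U → Par c U

/-- Well-formedness of an automaton transition function: each `δ (q, a)` is a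
nonempty set of nonempty conjunctions. -/
def AutWF {Q A : Type*} (δ : Q × A → Set (Set (D × Q))) : Prop :=
  ∀ q a, (δ (q, a)).Nonempty ∧ ∀ C ∈ δ (q, a), C.Nonempty

/-- The automaton is nondeterministic: within any conjunction, each direction
determines at most one state. -/
def NonDet {Q A : Type*} (δ : Q × A → Set (Set (D × Q))) : Prop :=
  ∀ q a, ∀ C ∈ δ (q, a), ∀ d : D, ∀ q₁ q₂ : Q, (d, q₁) ∈ C → (d, q₂) ∈ C → q₁ = q₂

/-- Image of a conjunction under a renaming of states. -/
def MapConj {Q Q' : Type*} (g : Q → Q') (C : Set (D × Q)) : Set (D × Q') :=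
  (fun p : D × Q => (p.1, g p.2)) '' C

/-- The transition function of the disjunction automaton `A₀ ⊕ A₁`. -/
def SumDelta {Q₀ Q₁ Alph : Type*} (δ₀ : Q₀ × Alph → Set (Set (D × Q₀)))
    (δ₁ : Q₁ × Alph → Set (Set (D × Q₁))) (i₀ : Q₀) (i₁ : Q₁) :
    Option (Q₀ ⊕ Q₁) × Alph → Set (Set (D × Option (Q₀ ⊕ Q₁))) :=
  fun p => match p.1 with
  | none =>
      (MapConj (fun q : Q₀ => some (Sum.inl q)) '' δ₀ (i₀, p.2)) ∪
      (MapConj (fun q : Q₁ => some (Sum.inr q)) '' δ₁ (i₁, p.2))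
  | some (Sum.inl q) => MapConj (fun q' : Q₀ => some (Sum.inl q')) '' δ₀ (q, p.2)
  | some (Sum.inr q) => MapConj (fun q' : Q₁ => some (Sum.inr q')) '' δ₁ (q, p.2)

/-- The coloring of the disjunction automaton `A₀ ⊕ A₁`. -/
def SumColor {Q₀ Q₁ : Type*} (n₀ n₁ : ℕ) (c₀ : Q₀ → Fin (n₀ + 1)) (c₁ : Q₁ → Fin (n₁ + 1)) :
    Option (Q₀ ⊕ Q₁) → ℕ :=
  fun q => match q with
  | none => max n₀ n₁
  | some (Sum.inl q) => (c₀ q : ℕ)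
  | some (Sum.inr q) => (c₁ q : ℕ)

theorem Glt.trans' {u v w : List D × (P ⊕ O)} (h : Glt u v) (h' : Glt v w) : Glt u w := by
  rcases h with ⟨h1, h2⟩ | ⟨h1, ⟨k, h2⟩, ⟨l, h3⟩⟩ <;>
    rcases h' with ⟨h4, h5⟩ | ⟨h4, ⟨k', h6⟩, ⟨l', h7⟩⟩
  · left
    refine ⟨h1.trans h4, ?_⟩
    intro h
    rw [← h] at h4
    exact h2 (h1.eq_of_length (le_antisymm h1.length_le h4.length_le))
  · left
    rw [← h4]
    exact ⟨h1, h2⟩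
  · left
    rw [h1]
    exact ⟨h4, h5⟩
  · rw [h3] at h6
    cases h6

theorem Glt.ne_nil {u v : List D × (P ⊕ O)} (h : Glt u v) (hu : u.1 ≠ []) : v.1 ≠ [] := by
  rcases h with ⟨h1, h2⟩ | ⟨h1, _⟩
  · intro h
    rw [h] at h1
    exact hu (List.prefix_nil.1 h1)
  · rwa [← h1]

theorem Edge.glt {eP : List D × P → Set O} {eO : List D × O → Set (D × P)}
    {u v : List D × (P ⊕ O)} (h : Edge eP eO u v) : Glt u v := by
  rcases h with ⟨x, k, l, rfl, rfl, _⟩ | ⟨x, l, d, k, rfl, rfl, _⟩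
  · right
    exact ⟨rfl, ⟨k, rfl⟩, ⟨l, rfl⟩⟩
  · left
    exact ⟨⟨[d], rfl⟩, by simp⟩

theorem Edge.two {eP : List D × P → Set O} {eO : List D × O → Set (D × P)}
    {u v w : List D × (P ⊕ O)} (h : Edge eP eO u v) (h' : Edge eP eO v w) : w.1 ≠ [] := by
  rcases h with ⟨x, k, l, rfl, rfl, _⟩ | ⟨x, l, d, k, rfl, rfl, _⟩ <;>
    rcases h' with ⟨x', k', l', h, rfl, _⟩ | ⟨x', l', d', k', h, rfl, _⟩ <;> simp_all
  rw [← h.1]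
  simp

/-- Position map. -/
def posMap {Q Q' : Type*} (τ : List D × Q' → Q' × Set (D × Q')) (g : List D → Q → Q')
    (u : List D × (Q ⊕ Q × Set (D × Q))) : List D × (Q' ⊕ Q' × Set (D × Q')) :=
  (u.1, Sum.elim (fun q => Sum.inl (g u.1 q)) (fun w => Sum.inr (τ (u.1, g u.1 w.1))) u.2)

theorem posMap_glt {Q Q' : Type*} (τ : List D × Q' → Q' × Set (D × Q')) (g : List D → Q → Q')
    (u v : List D × (Q ⊕ Q × Set (D × Q))) :
    Glt (posMap τ g u) (posMap τ g v) ↔ Glt u v := by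
  obtain ⟨x, a | a⟩ := u <;> obtain ⟨y, b | b⟩ := v <;> simp [posMap, Glt]

theorem transfer {Q Q' : Type*} (σ : List D × Q → Q × Set (D × Q))
    (τ : List D × Q' → Q' × Set (D × Q')) (c : Q → ℕ) (c' : Q' → ℕ) (g : List D → Q → Q')
    (J : List D → Q → Prop) (q₀ : Q) (q₀' : Q') (hJ : J [] q₀) (hg : g [] q₀ = q₀')
    (hσ : ∀ p, (σ p).1 = p.2) (hτ : ∀ p, (τ p).1 = p.2)
    (hstep : ∀ x q d q1, J x q → (d, q1) ∈ (σ (x, q)).2 →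
      J (x ++ [d]) q1 ∧ (d, g (x ++ [d]) q1) ∈ (τ (x, g x q)).2)
    (hc : ∀ x q, J x q → x ≠ [] → c' (g x q) = c q)
    (hwin : ∀ U, IsPlay (Edge (fun p => ({τ p} : Set (Q' × Set (D × Q')))) AccEO)
        ((([] : List D), Sum.inl q₀')) U → Par c' U)
    (U) (hU : IsPlay (Edge (fun p => ({σ p} : Set (Q × Set (D × Q)))) AccEO)
        ((([] : List D), Sum.inl q₀)) U) : Par c U := by
  set r := Edge (fun p => ({σ p} : Set (Q × Set (D × Q)))) AccEO with hr
  set r' := Edge (fun p => ({τ p} : Set (Q' × Set (D × Q')))) AccEO with hr'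
  let I : List D × (Q ⊕ Q × Set (D × Q)) → Prop := fun u =>
    Sum.elim (fun q => J u.1 q) (fun w => J u.1 w.1 ∧ w = σ (u.1, w.1)) u.2
  have key : ∀ u w, I u → r u w → I w ∧ r' (posMap τ g u) (posMap τ g w) := by
    intro u w hu h
    rcases h with ⟨x, k, l, rfl, rfl, hl⟩ | ⟨x, l, d, k, rfl, rfl, hl⟩
    · simp only [Set.mem_singleton_iff] at hl
      subst hl
      have hu' : J x k := hu
      have e : (σ (x, k)).1 = k := hσ _
      refine ⟨?_, Or.inl ⟨x, g x k, τ (x, g x k), rfl, ?_, rfl⟩⟩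
      · show J x (σ (x, k)).1 ∧ σ (x, k) = σ (x, (σ (x, k)).1)
        rw [e]
        exact ⟨hu', rfl⟩
      · simp [posMap, e]
    · have hu' : J x l.1 ∧ l = σ (x, l.1) := hu
      have hl' : (d, k) ∈ l.2 := hl
      rw [hu'.2] at hl'
      obtain ⟨a, b⟩ := hstep x l.1 d k hu'.1 hl'
      exact ⟨a, Or.inr ⟨x, τ (x, g x l.1), d, g (x ++ [d]) k, rfl, rfl, b⟩⟩
  have key2 : ∀ u w, I u → Relation.ReflTransGen r u w →
      I w ∧ Relation.ReflTransGen r' (posMap τ g u) (posMap τ g w) := by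
    intro u w hu h
    induction h with
    | refl => exact ⟨hu, .refl⟩
    | tail _ h2 ih => exact ⟨(key _ _ ih.1 h2).1, ih.2.tail (key _ _ ih.1 h2).2⟩
  have key3 : ∀ u w, I u → Relation.TransGen r u w →
      Relation.TransGen r' (posMap τ g u) (posMap τ g w) := by
    intro u w hu h
    obtain ⟨v, h1, h2⟩ := Relation.TransGen.head'_iff.1 h
    have := key _ _ hu h1
    exact Relation.TransGen.head' this.2 (key2 _ _ this.1 h2).2
  obtain ⟨u0, ureach, usucc, ucomp⟩ := hU
  have hI : ∀ u ∈ U, I u := fun u hu => (key2 _ _ (show I (([] : List D), Sum.inl q₀) from hJ) (ureach u hu)).1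
  have p0 : posMap τ g (([] : List D), Sum.inl q₀) = (([] : List D), Sum.inl q₀') := by
    simp [posMap, hg]
  have hpar := hwin (posMap τ g '' U) (by
    refine ⟨⟨_, u0, p0⟩, ?_, ?_, ?_⟩
    · rintro _ ⟨v, hv, rfl⟩
      rw [← p0]
      exact (key2 _ _ (show I (([] : List D), Sum.inl q₀) from hJ) (ureach v hv)).2
    · rintro _ ⟨v, hv, rfl⟩
      obtain ⟨w, hw, h⟩ := usucc v hv
      exact ⟨_, ⟨w, hw, rfl⟩, (key _ _ (hI v hv) h).2⟩
    · rintro _ ⟨v, hv, rfl⟩ _ ⟨w, hw, rfl⟩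
      rcases ucomp v hv w hw with h | h | h
      · exact Or.inl (key3 _ _ (hI v hv) h)
      · exact Or.inr (Or.inl (by rw [h]))
      · exact Or.inr (Or.inr (key3 _ _ (hI w hw) h)))
  have far : ∀ u ∈ U, ∃ w ∈ U, Glt u w ∧ w.1 ≠ [] := by
    intro u hu
    obtain ⟨v, hv, h⟩ := usucc u hu
    obtain ⟨w, hw, h'⟩ := usucc v hv
    exact ⟨w, hw, h.glt.trans' h'.glt, h.two h'⟩
  have hcol : ∀ u ∈ U, u.1 ≠ [] → HatC c' (posMap τ g u) = HatC c u := by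
    intro u hu hne
    have := hI u hu
    obtain ⟨x, q | w⟩ := u
    · exact hc x q this hne
    · have h2 : J x w.1 ∧ w = σ (x, w.1) := this
      show c' (τ (x, g x w.1)).1 = c w.1
      rw [hτ]
      exact hc x w.1 h2.1 hne
  obtain ⟨m, hm, hinf, ⟨_, ⟨b, hb, rfl⟩, hb2⟩⟩ := hpar
  refine ⟨m, hm, ?_, ?_⟩
  · intro u hu
    obtain ⟨w, hw, huw, hne⟩ := far u hu
    obtain ⟨_, ⟨v, hv, rfl⟩, h1, h2⟩ := hinf _ ⟨w, hw, rfl⟩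
    rw [posMap_glt] at h1
    exact ⟨v, hv, huw.trans' h1, by rw [← hcol v hv (h1.ne_nil hne), h2]⟩
  · obtain ⟨w, hw, huw, hne⟩ := far b hb
    refine ⟨w, hw, fun v hv h => ?_⟩
    rw [← hcol v hv (h.ne_nil hne)]
    exact hb2 _ ⟨v, hv, rfl⟩ ((posMap_glt τ g b v).2 (huw.trans' h))

theorem lemA {Alph Q S : Type*} (δ : Q × Alph → Set (Set (D × Q)))
    (Δ : S × Alph → Set (Set (D × S))) (c : Q → ℕ) (c' : S → ℕ) (i : Q) (n : S)
    (e : Q → S) (g : S → Q) (hge : ∀ q, g (e q) = q) (hgn : g n = i) (hne : ∀ q, e q ≠ n)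
    (hΔ : ∀ q a, Δ (e q, a) = MapConj e '' δ (q, a))
    (hn : ∀ a, MapConj e '' δ (i, a) ⊆ Δ (n, a))
    (hΔne : ∀ s a, (Δ (s, a)).Nonempty) (hc : ∀ q, c' (e q) = c q) (F : List D → Alph)
    (h : Accepts δ c i F) : Accepts Δ c' n F := by
  obtain ⟨σ, hσ, hwin⟩ := h
  have hex : ∀ p : List D × S, ∃ w : S × Set (D × S), w ∈ AccEP Δ F p ∧
      (∀ q, p.2 = e q → w.2 = MapConj e (σ (p.1, q)).2) ∧
      (p.2 = n → w.2 = MapConj e (σ (p.1, i)).2) := by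
    rintro ⟨x, s⟩
    by_cases h1 : ∃ q, s = e q
    · obtain ⟨q, rfl⟩ := h1
      refine ⟨(e q, MapConj e (σ (x, q)).2), ⟨rfl, ?_⟩, ?_, fun h => absurd h (hne q)⟩
      · show _ ∈ Δ (e q, F x)
        rw [hΔ]
        exact ⟨_, (hσ (x, q)).2, rfl⟩
      · intro q' hq'
        have : q = q' := by rw [← hge q, ← hge q']; exact congrArg g hq'
        rw [this]
    · by_cases h2 : s = n
      · subst h2
        exact ⟨(s, MapConj e (σ (x, i)).2), ⟨rfl, hn _ ⟨_, (hσ (x, i)).2, rfl⟩⟩,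
          fun q hq => absurd hq.symm (hne q), fun _ => rfl⟩
      · obtain ⟨C, hC⟩ := hΔne s (F x)
        exact ⟨(s, C), ⟨rfl, hC⟩, fun q hq => absurd ⟨q, hq⟩ h1, fun h => absurd h h2⟩
  choose τ hτ hτe hτn using hex
  refine ⟨τ, hτ, transfer τ σ c' c (fun _ => g)
    (fun x s => (x = [] ∧ s = n) ∨ (x ≠ [] ∧ ∃ q, s = e q)) n i (Or.inl ⟨rfl, rfl⟩) hgn
    (fun p => (hτ p).1) (fun p => (hσ p).1) ?_ ?_ hwin⟩
  · intro x s d s1 hJ hm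
    have : (τ (x, s)).2 = MapConj e (σ (x, g s)).2 := by
      rcases hJ with ⟨_, h⟩ | ⟨_, q, h⟩
      · rw [hτn (x, s) h, h, hgn]
      · rw [hτe (x, s) q h, h, hge]
    rw [this] at hm
    obtain ⟨⟨d', q⟩, hq, heq⟩ := hm
    simp only [Prod.mk.injEq] at heq
    obtain ⟨rfl, rfl⟩ := heq
    refine ⟨Or.inr ⟨by simp, q, rfl⟩, ?_⟩
    rwa [hge]
  · rintro x s (⟨h, _⟩ | ⟨_, q, rfl⟩) hx
    · exact absurd h hx
    · rw [hge, hc]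

theorem lemB {Alph Q S : Type*} (δ : Q × Alph → Set (Set (D × Q)))
    (Δ : S × Alph → Set (Set (D × S))) (c : Q → ℕ) (c' : S → ℕ) (i : Q) (n : S)
    (e : Q → S)
    (hΔ : ∀ q a, Δ (e q, a) = MapConj e '' δ (q, a))
    (hc : ∀ q, c' (e q) = c q) (F : List D → Alph)
    (τ : List D × S → S × Set (D × S)) (hτ : ∀ p, τ p ∈ AccEP Δ F p)
    (hwin : ∀ U, IsPlay (Edge (fun p => ({τ p} : Set (S × Set (D × S)))) AccEO)
        ((([] : List D), Sum.inl n)) U → Par c' U)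
    (hroot : (τ ([], n)).2 ∈ MapConj e '' δ (i, F [])) : Accepts δ c i F := by
  classical
  have hex : ∀ p : List D × Q, ∃ w : Q × Set (D × Q), w ∈ AccEP δ F p ∧
      (p.1 ≠ [] → (τ (p.1, e p.2)).2 = MapConj e w.2) ∧
      (p.1 = [] → p.2 = i → (τ ([], n)).2 = MapConj e w.2) := by
    rintro ⟨x, q⟩
    by_cases h : x = [] ∧ q = i
    · obtain ⟨rfl, rfl⟩ := h
      obtain ⟨C, hC, h⟩ := hroot
      exact ⟨(q, C), ⟨rfl, hC⟩, fun h => absurd rfl h, fun _ _ => h.symm⟩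
    · have h1 : (τ (x, e q)).2 ∈ Δ (e q, F x) := (hτ (x, e q)).2
      rw [hΔ] at h1
      obtain ⟨C, hC, h2⟩ := h1
      exact ⟨(q, C), ⟨rfl, hC⟩, fun _ => h2.symm, fun a b => absurd ⟨a, b⟩ h⟩
  choose σ hσ hσ1 hσ2 using hex
  refine ⟨σ, hσ, transfer σ τ c c' (fun x q => if x = [] then n else e q)
    (fun x q => x = [] → q = i) i n (fun _ => rfl) (by simp)
    (fun p => (hσ p).1) (fun p => (hτ p).1) ?_ ?_ hwin⟩
  · intro x q d q1 hJ hm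
    refine ⟨by simp, ?_⟩
    have : (τ (x, if x = [] then n else e q)).2 = MapConj e (σ (x, q)).2 := by
      by_cases hx : x = []
      · subst hx
        simpa using hσ2 ([], q) rfl (hJ rfl)
      · simpa [hx] using hσ1 (x, q) hx
    show (d, if x ++ [d] = [] then n else e q1) ∈ (τ (x, if x = [] then n else e q)).2
    rw [this]
    exact ⟨(d, q1), hm, by simp⟩
  · intro x q _ hx
    simp [hx, hc]

theorem disjunction {Alph Q₀ Q₁ : Type*} [Fintype D] [Nonempty D]
    [Fintype Alph] [Nonempty Alph] [Fintype Q₀] [Nonempty Q₀] [Fintype Q₁] [Nonempty Q₁]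
    (n₀ n₁ : ℕ)
    (δ₀ : Q₀ × Alph → Set (Set (D × Q₀))) (δ₁ : Q₁ × Alph → Set (Set (D × Q₁)))
    (i₀ : Q₀) (i₁ : Q₁) (c₀ : Q₀ → Fin (n₀ + 1)) (c₁ : Q₁ → Fin (n₁ + 1))
    (h₀ : AutWF δ₀) (h₁ : AutWF δ₁) (F : List D → Alph) :
    Accepts (SumDelta δ₀ δ₁ i₀ i₁) (SumColor n₀ n₁ c₀ c₁) (none : Option (Q₀ ⊕ Q₁)) F ↔
      Accepts δ₀ (fun q => (c₀ q : ℕ)) i₀ F ∨ Accepts δ₁ (fun q => (c₁ q : ℕ)) i₁ F := by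
  have hne : ∀ s a, (SumDelta δ₀ δ₁ i₀ i₁ (s, a)).Nonempty := by
    rintro (_ | q | q) a
    · exact ((h₀ i₀ a).1.image _).inl
    · exact (h₀ q a).1.image _
    · exact (h₁ q a).1.image _
  constructor
  · rintro ⟨τ, hτ, hwin⟩
    have hr : (τ ([], none)).2 ∈ SumDelta δ₀ δ₁ i₀ i₁ (none, F []) := (hτ ([], none)).2
    rcases hr with hr | hr
    · exact Or.inl (lemB δ₀ _ _ _ i₀ none (fun q => some (Sum.inl q)) (fun _ _ => rfl)
        (fun _ => rfl) F τ hτ hwin hr)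
    · exact Or.inr (lemB δ₁ _ _ _ i₁ none (fun q => some (Sum.inr q)) (fun _ _ => rfl)
        (fun _ => rfl) F τ hτ hwin hr)
  · rintro (h | h)
    · exact lemA δ₀ _ _ _ i₀ none (fun q => some (Sum.inl q))
        (fun s => s.elim i₀ (Sum.elim id fun _ => i₀)) (fun _ => rfl) rfl (fun _ => by simp)
        (fun _ _ => rfl) (fun _ => Set.subset_union_left) hne (fun _ => rfl) F h
    · exact lemA δ₁ _ _ _ i₁ none (fun q => some (Sum.inr q))
        (fun s => s.elim i₁ (Sum.elim (fun _ => i₁) id)) (fun _ => rfl) rfl (fun _ => by simp)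
        (fun _ _ => rfl) (fun _ => Set.subset_union_right) hne (fun _ => rfl) F h

end TreeGames
end

section
/- (Unique states along plays of nondeterministic automata) Let A be a nondeterministic alternating tree automaton over Σ, let F : List D → Σ, and let σ be a Proponent strategy in the acceptance game G(A,F). Then for every tree position x : List D there is at most one state q : Q such that some infinite play of the σ-restricted game from ([], q₀) contains the position (x, Sum.inl q). -/
namespace TreeGames

variable {D P O : Type*}

theorem reach_inl_aux {Q : Type*} (σ : List D × Q → Q × Set (D × Q))
    (u : List D × (Q ⊕ Q × Set (D × Q))) (x : List D) (q : Q)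
    (h : Relation.ReflTransGen (Edge (fun p => ({σ p} : Set (Q × Set (D × Q)))) AccEO) u
      (x, Sum.inl q)) (q₀ : Q) (hu : u = (([] : List D), Sum.inl q₀)) :
    (x = [] ∧ q = q₀) ∨ ∃ y d p, x = y ++ [d] ∧
      Relation.ReflTransGen (Edge (fun p => ({σ p} : Set (Q × Set (D × Q)))) AccEO) u
        (y, Sum.inl p) ∧ (d, q) ∈ (σ (y, p)).2 := by
  subst hu
  rcases Relation.ReflTransGen.cases_tail h with h | ⟨v, hv, e⟩
  · left
    simpa using h
  · right
    rcases e with ⟨_, _, _, _, h2, _⟩ | ⟨y, l, d, k, rfl, h2, h3⟩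
    · simp at h2
    · simp only [Prod.mk.injEq, Sum.inl.injEq] at h2
      obtain ⟨rfl, rfl⟩ := h2
      rcases Relation.ReflTransGen.cases_tail hv with h | ⟨w, hw, e⟩
      · simp at h
      · rcases e with ⟨z, p, l', rfl, h4, h5⟩ | ⟨_, _, _, _, _, h4, _⟩
        · simp only [Prod.mk.injEq, Sum.inr.injEq] at h4
          obtain ⟨rfl, rfl⟩ := h4
          refine ⟨y, d, p, rfl, hw, ?_⟩
          have h6 : l = σ (y, p) := h5
          rw [← h6]
          exact h3
        · simp at h4

theorem nondeterministic_unique_state {Alph Q : Type*} [Fintype D] [Nonempty D]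
    [Fintype Alph] [Nonempty Alph] [Fintype Q] [Nonempty Q]
    (δ : Q × Alph → Set (Set (D × Q))) (q₀ : Q)
    (hA : AutWF δ) (hnd : NonDet δ) (F : List D → Alph)
    (σ : List D × Q → Q × Set (D × Q)) (hσ : ∀ p, σ p ∈ AccEP δ F p)
    (x : List D) (q q' : Q)
    (h : ∃ U : Set (List D × (Q ⊕ Q × Set (D × Q))),
      IsPlay (Edge (fun p => ({σ p} : Set (Q × Set (D × Q)))) AccEO)
        ((([] : List D), Sum.inl q₀)) U ∧ (x, Sum.inl q) ∈ U)
    (h' : ∃ U : Set (List D × (Q ⊕ Q × Set (D × Q))),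
      IsPlay (Edge (fun p => ({σ p} : Set (Q × Set (D × Q)))) AccEO)
        ((([] : List D), Sum.inl q₀)) U ∧ (x, Sum.inl q') ∈ U) :
    q = q' := by
  obtain ⟨U, hU, hx⟩ := h
  obtain ⟨U', hU', hx'⟩ := h'
  have r := hU.2.1 _ hx
  have r' := hU'.2.1 _ hx'
  clear hx hx' hU hU'
  induction x using List.reverseRecOn generalizing q q' with
  | nil =>
    rcases reach_inl_aux σ _ _ _ r q₀ rfl with ⟨_, a⟩ | ⟨y, d, p, a, _⟩
    · rcases reach_inl_aux σ _ _ _ r' q₀ rfl with ⟨_, b⟩ | ⟨y, d, p, b, _⟩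
      · rw [a, b]
      · simp at b
    · simp at a
  | append_singleton x d ih =>
    rcases reach_inl_aux σ _ _ _ r q₀ rfl with ⟨a, _⟩ | ⟨y, e, p, a, hp, m⟩
    · simp at a
    rcases reach_inl_aux σ _ _ _ r' q₀ rfl with ⟨b, _⟩ | ⟨y', e', p', b, hp', m'⟩
    · simp at b
    obtain ⟨rfl, a2⟩ := List.append_inj' a rfl
    obtain ⟨rfl, b2⟩ := List.append_inj' b rfl
    simp only [List.cons.injEq, and_true] at a2 b2
    subst a2 b2
    obtain rfl := ih p p' hp hp'
    exact hnd _ _ _ (hσ (x, p)).2 d q q' m m'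

end TreeGames
end

section
/- (Projection) Let A be a nondeterministic parity automaton over the product alphabet Σ × Γ (with Σ, Γ nonempty finite). Define the parity automaton ∃_Γ A over Σ with the same states, initial state and coloring as A, and transitions δ' (q, a) = ⋃ over b : Γ of δ_A (q, (a, b)). Then for every tree F : List D → Σ: F ∈ L(∃_Γ A) if and only if there exists G : List D → Γ with (fun x => (F x, G x)) ∈ L(A). -/
namespace TreeGames

variable {D P O : Type*}

theorem reach_inv {Q : Type*} (σ : List D × Q → Q × Set (D × Q)) (q₀ : Q) (x : List D) (q : Q)
    (h : Relation.ReflTransGen (Edge (fun p => ({σ p} : Set (Q × Set (D × Q)))) AccEO)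
      ((([] : List D), Sum.inl q₀)) (x, Sum.inl q)) :
    (x = [] ∧ q = q₀) ∨ ∃ y d k, x = y ++ [d] ∧
      Relation.ReflTransGen (Edge (fun p => ({σ p} : Set (Q × Set (D × Q)))) AccEO)
      ((([] : List D), Sum.inl q₀)) (y, Sum.inl k) ∧ (d, q) ∈ (σ (y, k)).2 := by
  rcases Relation.ReflTransGen.cases_tail h with h | ⟨u, hu, he⟩
  · left
    simpa using h
  · right
    rcases he with ⟨_, _, _, _, h2, _⟩ | ⟨y, l, d, k, rfl, h2, h3⟩
    · simp at h2
    · simp only [Prod.mk.injEq, Sum.inl.injEq] at h2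
      obtain ⟨rfl, rfl⟩ := h2
      rcases Relation.ReflTransGen.cases_tail hu with h | ⟨v, hv, he⟩
      · simp at h
      · rcases he with ⟨y', k', l', rfl, h2, h4⟩ | ⟨_, _, _, _, _, h2, _⟩
        · simp only [Prod.mk.injEq, Sum.inr.injEq] at h2
          obtain ⟨rfl, rfl⟩ := h2
          simp only [Set.mem_singleton_iff] at h4
          subst h4
          exact ⟨y, d, k', rfl, hv, h3⟩
        · simp at h2

theorem reach_unique {Q : Type*} (σ : List D × Q → Q × Set (D × Q)) (q₀ : Q)
    (hσ : ∀ p d q₁ q₂, (d, q₁) ∈ (σ p).2 → (d, q₂) ∈ (σ p).2 → q₁ = q₂) (x : List D) :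
    ∀ q q' : Q,
    Relation.ReflTransGen (Edge (fun p => ({σ p} : Set (Q × Set (D × Q)))) AccEO)
      ((([] : List D), Sum.inl q₀)) (x, Sum.inl q) →
    Relation.ReflTransGen (Edge (fun p => ({σ p} : Set (Q × Set (D × Q)))) AccEO)
      ((([] : List D), Sum.inl q₀)) (x, Sum.inl q') → q = q' := by
  induction x using List.reverseRecOn with
  | nil =>
    intro q q' h h'
    rcases reach_inv σ q₀ _ _ h with ⟨_, h1⟩ | ⟨y, d, k, h1, _⟩
    · rcases reach_inv σ q₀ _ _ h' with ⟨_, h2⟩ | ⟨y, d, k, h2, _⟩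
      · rw [h1, h2]
      · simp at h2
    · simp at h1
  | append_singleton x d ih =>
    intro q q' h h'
    rcases reach_inv σ q₀ _ _ h with ⟨h1, _⟩ | ⟨y, e, k, h1, h2, h3⟩
    · simp at h1
    rcases reach_inv σ q₀ _ _ h' with ⟨h1', _⟩ | ⟨y', e', k', h1', h2', h3'⟩
    · simp at h1'
    obtain ⟨rfl, h4⟩ := List.append_inj' h1 rfl
    obtain ⟨rfl, h4'⟩ := List.append_inj' h1' rfl
    simp only [List.cons.injEq, and_true] at h4 h4'
    subst h4 h4'
    obtain rfl := ih _ _ h2 h2'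
    exact hσ _ _ _ _ h3 h3'

/-- Two relations agreeing on the part reachable in the second. -/
theorem play_transfer {α : Type*} (r s : α → α → Prop) (u₀ : α) (U : Set α)
    (h : ∀ v w, Relation.ReflTransGen s u₀ v → r v w → s v w) (hU : IsPlay r u₀ U) :
    IsPlay s u₀ U := by
  have h1 : ∀ v w, Relation.ReflTransGen s u₀ v → Relation.ReflTransGen r v w →
      Relation.ReflTransGen s v w := by
    intro v w hv hw
    induction hw with
    | refl => exact .refl
    | tail _ h2 ih => exact ih.tail (h _ _ (hv.trans ih) h2)
  have h2 : ∀ v w, Relation.ReflTransGen s u₀ v → Relation.TransGen r v w →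
      Relation.TransGen s v w := by
    intro v w hv hw
    obtain ⟨b, hb, hbw⟩ := Relation.TransGen.tail'_iff.1 hw
    have := h1 _ _ hv hb
    exact Relation.TransGen.tail' this (h _ _ (hv.trans this) hbw)
  obtain ⟨a, b, c, d⟩ := hU
  have hr : ∀ v ∈ U, Relation.ReflTransGen s u₀ v := fun v hv => h1 _ _ .refl (b v hv)
  refine ⟨a, hr, ?_, ?_⟩
  · intro v hv
    obtain ⟨w, hw, hvw⟩ := c v hv
    exact ⟨w, hw, h _ _ (hr v hv) hvw⟩
  · intro v hv w hw
    rcases d v hv w hw with h | h | h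
    · exact .inl (h2 _ _ (hr v hv) h)
    · exact .inr (.inl h)
    · exact .inr (.inr (h2 _ _ (hr w hw) h))

theorem projection {Alph Gam Q : Type*} [Fintype D] [Nonempty D]
    [Fintype Alph] [Nonempty Alph] [Fintype Gam] [Nonempty Gam]
    [Fintype Q] [Nonempty Q]
    (δ : Q × (Alph × Gam) → Set (Set (D × Q))) (c : Q → ℕ) (q₀ : Q)
    (hA : AutWF δ) (hnd : NonDet δ) (F : List D → Alph) :
    Accepts (fun p => ⋃ b : Gam, δ (p.1, (p.2, b))) c q₀ F ↔
      ∃ G : List D → Gam, Accepts δ c q₀ (fun x => (F x, G x)) := by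
  constructor
  · rintro ⟨σ, hσ, hwin⟩
    have hσ2 : ∀ p : List D × Q, ∃ b : Gam, (σ p).2 ∈ δ (p.2, (F p.1, b)) := by
      intro p
      have := (hσ p).2
      simpa using this
    have huniq := reach_unique σ q₀ (fun p d q₁ q₂ h1 h2 => by
      obtain ⟨b, hb⟩ := hσ2 p
      exact hnd _ _ _ hb d _ _ h1 h2)
    set R := Relation.ReflTransGen (Edge (fun p => ({σ p} : Set (Q × Set (D × Q)))) AccEO)
      ((([] : List D), Sum.inl q₀)) with hR
    have hG : ∀ x : List D, ∃ b : Gam, ∀ q, R (x, Sum.inl q) → (σ (x, q)).2 ∈ δ (q, (F x, b)) := by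
      intro x
      by_cases hx : ∃ q, R (x, Sum.inl q)
      · obtain ⟨q, hq⟩ := hx
        obtain ⟨b, hb⟩ := hσ2 (x, q)
        refine ⟨b, fun q' hq' => ?_⟩
        obtain rfl := huniq _ _ _ hq hq'
        exact hb
      · exact ⟨Classical.arbitrary _, fun q hq => absurd ⟨q, hq⟩ hx⟩
    choose G hG using hG
    have hs : ∀ p : List D × Q, ∃ w, w ∈ AccEP δ (fun x => (F x, G x)) p ∧
        (R (p.1, Sum.inl p.2) → w = σ p) := by
      intro p
      by_cases hp : R (p.1, Sum.inl p.2)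
      · exact ⟨σ p, ⟨(hσ p).1, hG _ _ hp⟩, fun _ => rfl⟩
      · obtain ⟨C, hC⟩ := (hA p.2 (F p.1, G p.1)).1
        exact ⟨(p.2, C), ⟨rfl, hC⟩, fun h => absurd h hp⟩
    choose τ hτ1 hτ2 using hs
    refine ⟨G, τ, hτ1, fun U hU => hwin U (play_transfer _ _ _ _ ?_ hU)⟩
    rintro v w hv (⟨x, k, l, rfl, rfl, hl⟩ | h)
    · refine Or.inl ⟨x, k, l, rfl, rfl, ?_⟩
      simp only [Set.mem_singleton_iff] at hl ⊢
      rw [hl]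
      exact hτ2 (x, k) hv
    · exact Or.inr h
  · rintro ⟨G, σ, hσ, hwin⟩
    exact ⟨σ, fun p => ⟨(hσ p).1, Set.mem_iUnion.2 ⟨G p.1, (hσ p).2⟩⟩, hwin⟩

end TreeGames
end

section
/- (Simulation Theorem) For every alternating parity tree automaton A over a nonempty finite alphabet Σ there exists a nondeterministic parity tree automaton N over Σ such that L(N) = L(A), i.e. for every tree F : List D → Σ, F ∈ L(N) if and only if F ∈ L(A). -/
namespace TreeGames

variable {D P O : Type*}

/-! ### Auxiliary development -/

/-- Parity condition on sequences. -/
def SeqPar (a : ℕ → ℕ) : Prop :=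
  ∃ m, Even m ∧ (∀ n, ∃ k, n ≤ k ∧ a k = m) ∧ ∃ n, ∀ k, n ≤ k → m ≤ a k

/-- Run of a deterministic machine. -/
def runD {Y A : Type*} (st : Y → A → Y) (y0 : Y) (w : ℕ → A) : ℕ → Y
  | 0 => y0
  | k + 1 => st (runD st y0 w k) (w k)

/-! #### Latest appearance records -/

open Classical in
/-- Step of the appearance record. -/
noncomputable def larStep {E : Type} (m : (E → Set E) × Set E) (e : E) :
    (E → Set E) × Set E :=
  (fun e' => if e' = e then ∅ else insert e (m.1 e'), insert e (m.1 e))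

open Classical in
/-- Color of the appearance record. -/
noncomputable def larCol {E : Type} (Acc : Set E → Prop) (m : (E → Set E) × Set E) : ℕ :=
  2 * (Nat.card E - m.2.ncard) + if Acc m.2 then 0 else 1

theorem lar_mem {E : Type} (ev : ℕ → E) (k : ℕ) (e' a : E) :
    a ∈ (runD larStep ((fun _ => ∅, ∅) : (E → Set E) × Set E) ev k).1 e' ↔
      ∃ l, l < k ∧ ev l = a ∧ ∀ l', l ≤ l' → l' < k → ev l' ≠ e' := by
  induction k generalizing a with
  | zero => simp [runD]
  | succ k ih =>
    simp only [runD, larStep]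
    by_cases h : e' = ev k
    · simp only [h, if_true, Set.mem_empty_iff_false, false_iff]
      rintro ⟨l, hl, -, hl2⟩
      exact hl2 k (by omega) (by omega) rfl
    · simp only [h, if_false, Set.mem_insert_iff, ih]
      constructor
      · rintro (rfl | ⟨l, hl, hla, hl2⟩)
        · exact ⟨k, by omega, rfl, fun l' h1 h2 => by
            obtain rfl : l' = k := by omega
            exact fun hh => h hh.symm⟩
        · refine ⟨l, by omega, hla, fun l' h1 h2 => ?_⟩
          by_cases h3 : l' = k
          · subst h3; exact fun hh => h hh.symm
          · exact hl2 l' h1 (by omega)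
      · rintro ⟨l, hl, hla, hl2⟩
        by_cases h3 : l = k
        · subst h3; exact Or.inl hla.symm
        · exact Or.inr ⟨l, by omega, hla, fun l' h1 h2 => hl2 l' h1 (by omega)⟩

theorem seqPar_iff_of_liminf (a : ℕ → ℕ) (m : ℕ) (h1 : ∀ n, ∃ k, n ≤ k ∧ a k = m)
    (h2 : ∃ n, ∀ k, n ≤ k → m ≤ a k) : SeqPar a ↔ Even m := by
  constructor
  · rintro ⟨m', he, h3, n', h4⟩
    obtain ⟨n, h2⟩ := h2
    obtain ⟨k, hk, hka⟩ := h1 n'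
    obtain ⟨k', hk', hka'⟩ := h3 n
    have := h4 k hk
    have := h2 k' hk'
    obtain rfl : m = m' := by omega
    exact he
  · intro he
    exact ⟨m, he, h1, h2⟩

theorem lar_correct {E : Type} [Finite E] (Acc : Set E → Prop) (ev : ℕ → E) :
    SeqPar (fun k => larCol Acc (runD larStep ((fun _ => ∅, ∅) : (E → Set E) × Set E) ev k)) ↔
      Acc {e | ∀ n, ∃ k, n ≤ k ∧ ev k = e} := by
  classical
  set I : Set E := {e | ∀ n, ∃ k, n ≤ k ∧ ev k = e} with hI
  set R := runD larStep ((fun _ => ∅, ∅) : (E → Set E) × Set E) ev with hR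
  have hH : ∀ k, (R (k+1)).2 = insert (ev k) ((R k).1 (ev k)) := fun k => rfl
  -- after some time only events of I
  have hT : ∃ T, ∀ k, T ≤ k → ev k ∈ I := by
    have : ∀ e : E, ∃ n, e ∈ I ∨ ∀ k, n ≤ k → ev k ≠ e := by
      intro e
      by_cases he : e ∈ I
      · exact ⟨0, Or.inl he⟩
      · simp only [hI, Set.mem_ofPred_eq, not_forall, not_exists, not_and] at he
        obtain ⟨n, hn⟩ := he
        exact ⟨n, Or.inr hn⟩
    choose n hn using this
    obtain ⟨T, hT⟩ := (Set.finite_range n).bddAbove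
    refine ⟨T, fun k hk => ?_⟩
    rcases hn (ev k) with h | h
    · exact h
    · exact absurd rfl (h k (le_trans (hT ⟨ev k, rfl⟩) hk))
  obtain ⟨T, hT⟩ := hT
  have hocc : ∀ K, ∃ n : E → ℕ, ∀ e ∈ I, K ≤ n e ∧ ev (n e) = e ∧
      ∀ l, K ≤ l → l < n e → ev l ≠ e := by
    intro K
    have : ∀ e : E, ∃ n, e ∈ I → K ≤ n ∧ ev n = e ∧ ∀ l, K ≤ l → l < n → ev l ≠ e := by
      intro e
      by_cases he : e ∈ I
      · have hx : ∃ k, K ≤ k ∧ ev k = e := he K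
        refine ⟨Nat.find hx, fun _ => ⟨(Nat.find_spec hx).1, (Nat.find_spec hx).2, ?_⟩⟩
        intro l h1 h2 h3
        exact Nat.find_min hx h2 ⟨h1, h3⟩
      · exact ⟨0, fun h => absurd h he⟩
    choose n hn using this
    exact ⟨n, fun e he => hn e he⟩
  have hsub : ∃ T', ∀ k, T' ≤ k → (R (k+1)).2 ⊆ I := by
    obtain ⟨n, hn⟩ := hocc T
    obtain ⟨T1, hT1⟩ := (Set.finite_range n).bddAbove
    refine ⟨max T (T1 + 1), fun k hk => ?_⟩
    have hkT : T ≤ k := le_trans (le_max_left _ _) hk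
    have hkT1 : T1 + 1 ≤ k := le_trans (le_max_right _ _) hk
    rw [hH]
    intro a ha
    rcases ha with rfl | ha
    · exact hT k hkT
    · rw [hR, lar_mem] at ha
      obtain ⟨l, hl, rfl, hl2⟩ := ha
      obtain ⟨h1, h2, -⟩ := hn (ev k) (hT k hkT)
      have h3 : n (ev k) ≤ T1 := hT1 ⟨_, rfl⟩
      by_cases h4 : l ≤ n (ev k)
      · exact absurd h2 (hl2 _ h4 (by omega))
      · exact hT l (by omega)
  obtain ⟨T', hT'⟩ := hsub
  have hfull : ∀ K, ∃ k, K ≤ k ∧ I ⊆ (R (k+1)).2 := by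
    intro K
    obtain ⟨n, hn⟩ := hocc K
    have hne : I.Nonempty := ⟨ev T, hT T le_rfl⟩
    obtain ⟨e, he, hmax⟩ := Set.exists_max_image I n (Set.toFinite I) hne
    obtain ⟨h1, h2, h3⟩ := hn e he
    refine ⟨n e, h1, fun a ha => ?_⟩
    rw [hH, h2]
    by_cases hae : a = e
    · exact Or.inl hae
    · right
      rw [hR, lar_mem]
      obtain ⟨g1, g2, g3⟩ := hn a ha
      refine ⟨n a, lt_of_le_of_ne (hmax a ha) ?_, g2, fun l' q1 q2 => h3 l' (by omega) q2⟩
      intro hh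
      exact hae (by rw [← g2, hh, h2])
  rw [seqPar_iff_of_liminf _ (2 * (Nat.card E - I.ncard) + if Acc I then 0 else 1)]
  · by_cases h : Acc I
    · simp [h]
    · simp [h]
  · intro N
    obtain ⟨k, hk, hk2⟩ := hfull (max N T')
    refine ⟨k + 1, by have := le_max_left N T'; omega, ?_⟩
    have : (R (k+1)).2 = I := Set.Subset.antisymm (hT' k (le_trans (le_max_right _ _) hk)) hk2
    simp only [larCol, this]
  · refine ⟨T' + 1, fun k hk => ?_⟩
    obtain ⟨k, rfl⟩ : ∃ k', k = k' + 1 := ⟨k - 1, by omega⟩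
    have hs := hT' k (by omega)
    simp only [larCol]
    by_cases heq : (R (k+1)).2 = I
    · rw [heq]
    · have h1 : ((R (k+1)).2).ncard < I.ncard :=
        Set.ncard_lt_ncard (lt_of_le_of_ne hs heq) (Set.toFinite I)
      have h2 : I.ncard ≤ Nat.card E := Set.ncard_le_card I
      split_ifs <;> omega

/-! #### The merging machine -/

/-- State of `f` after reading letters `i, …, k-1` of `w` (and `s0` if `k ≤ i`). -/
def seg {S A : Type*} (f : S → A → S) (s0 : S) (w : ℕ → A) (i : ℕ) : ℕ → S
  | 0 => s0
  | k + 1 => if k + 1 ≤ i then s0 else f (seg f s0 w i k) (w k)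

theorem seg_le {S A : Type*} (f : S → A → S) (s0 : S) (w : ℕ → A) (i k : ℕ) (h : k ≤ i) :
    seg f s0 w i k = s0 := by
  cases k with
  | zero => rfl
  | succ k => simp [seg, h]

theorem seg_succ {S A : Type*} (f : S → A → S) (s0 : S) (w : ℕ → A) (i k : ℕ) (h : i ≤ k) :
    seg f s0 w i (k+1) = f (seg f s0 w i k) (w k) := by
  have : ¬ (k + 1 ≤ i) := by omega
  simp [seg, this]

theorem seg_merge {S A : Type*} (f : S → A → S) (s0 : S) (w : ℕ → A) (i j k : ℕ)
    (hi : i ≤ k) (hj : j ≤ k) (h : seg f s0 w i k = seg f s0 w j k) (n : ℕ) (hn : k ≤ n) :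
    seg f s0 w i n = seg f s0 w j n := by
  induction n, hn using Nat.le_induction with
  | base => exact h
  | succ n hn ih => rw [seg_succ _ _ _ _ _ (by omega), seg_succ _ _ _ _ _ (by omega), ih]

theorem exists_collision {S : Type} [Finite S] (v : Fin (Nat.card S + 1) → S) :
    ∃ p : Fin (Nat.card S + 1) × Fin (Nat.card S + 1), p.2 < p.1 ∧ v p.2 = v p.1 := by
  have : ¬ Function.Injective v := by
    intro hinj
    have := Nat.card_le_card_of_injective v hinj
    simp at this
  simp only [Function.Injective, not_forall] at this
  obtain ⟨a, b, hab, hne⟩ := this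
  rcases lt_or_gt_of_ne hne with h | h
  · exact ⟨(b, a), h, hab⟩
  · exact ⟨(a, b), h, hab.symm⟩

/-- A chosen collision. -/
noncomputable def coll {S : Type} [Finite S] (v : Fin (Nat.card S + 1) → S) :
    Fin (Nat.card S + 1) × Fin (Nat.card S + 1) := (exists_collision v).choose

theorem coll_lt {S : Type} [Finite S] (v : Fin (Nat.card S + 1) → S) : (coll v).2 < (coll v).1 :=
  (exists_collision v).choose_spec.1

theorem coll_eq {S : Type} [Finite S] (v : Fin (Nat.card S + 1) → S) :
    v (coll v).2 = v (coll v).1 :=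
  (exists_collision v).choose_spec.2

/-- Slots. -/
abbrev Slot (S : Type) : Type := Fin (Nat.card S + 1)

/-- States of the merging machine. -/
abbrev MSt (S : Type) : Type := (Slot S → S) × (Slot S → Slot S → S)

/-- Events of the merging machine. -/
abbrev MEv (S : Type) : Type := Slot S × Slot S × S × S

/-- Collision upon reading `a`. -/
noncomputable def mcoll {S A : Type} [Finite S] (f : S → A → S) (x : MSt S) (a : A) :
    Slot S × Slot S := coll (fun t => f (x.1 t) a)

/-- Event upon reading `a`. -/
noncomputable def mev {S A : Type} [Finite S] (f : S → A → S) (x : MSt S) (a : A) : MEv S :=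
  ((mcoll f x a).1, (mcoll f x a).2, x.2 (mcoll f x a).1 0, x.2 (mcoll f x a).1 (mcoll f x a).2)

/-- New values upon reading `a`. -/
noncomputable def mval {S A : Type} [Finite S] (f : S → A → S) (s0 : S) (x : MSt S) (a : A) :
    Slot S → S := fun t => if t = (mcoll f x a).1 then s0 else f (x.1 t) a

/-- Step of the merging machine. -/
noncomputable def mstep {S A : Type} [Finite S] (f : S → A → S) (s0 : S) (x : MSt S) (a : A) :
    MSt S :=
  (mval f s0 x a, fun t => if t = (mcoll f x a).1 then mval f s0 x a else x.2 t)

/-- Types read off the set of events occurring infinitely often. -/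
def MTy {S : Type} (I : Set (MEv S)) (s e : S) : Prop :=
  ∃ t t', (t', t, s, e) ∈ I ∧ ∀ r, (t, r) ∉ I

/-- Factorizations of type `(s, e)`. -/
def Fact {S A : Type*} (f : S → A → S) (s0 : S) (w : ℕ → A) (s e : S) : Prop :=
  ∃ j : ℕ → ℕ, StrictMono j ∧ j 0 = 0 ∧ seg f s0 w (j 0) (j 1) = s ∧
    ∀ m, seg f s0 w (j (m+1)) (j (m+2)) = e

theorem mty_exists {S : Type} [Finite S] (ev : ℕ → MEv S) (hlt : ∀ k, (ev k).2.1 < (ev k).1) :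
    ∃ s e, MTy {e | ∀ n, ∃ k, n ≤ k ∧ ev k = e} s e := by
  classical
  set I : Set (MEv S) := {e | ∀ n, ∃ k, n ≤ k ∧ ev k = e} with hI
  have hne : I.Nonempty := by
    obtain ⟨e, he⟩ := Finite.exists_infinite_fiber ev
    refine ⟨e, fun n => ?_⟩
    obtain ⟨k, hk, hk2⟩ := (Set.infinite_coe_iff.mp he).exists_gt n
    exact ⟨k, hk2.le, hk⟩
  obtain ⟨⟨t', t, s, e⟩, he, hmin⟩ := Set.exists_min_image I (fun e => e.1) (Set.toFinite I) hne
  refine ⟨s, e, t, t', he, fun r hr => ?_⟩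
  have h1 := hmin _ hr
  obtain ⟨k, -, hk⟩ := he 0
  have h2 := hlt k
  rw [hk] at h2
  exact absurd h2 (not_lt.mpr h1)

theorem mty_fact {S A : Type} [Finite S] (f : S → A → S) (s0 : S) (w : ℕ → A) (s e : S)
    (x : ℕ → MSt S) (hx : x = runD (mstep f s0) (fun _ => s0, fun _ _ => s0) w)
    (h : MTy {e | ∀ n, ∃ k, n ≤ k ∧ mev f (x k) (w k) = e} s e) : Fact f s0 w s e := by
  classical
  have hx0 : x 0 = (fun _ => s0, fun _ _ => s0) := by rw [hx]; rfl
  have hxs : ∀ k, x (k+1) = mstep f s0 (x k) (w k) := by intro k; rw [hx]; rfl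
  clear hx
  set cl : ℕ → Slot S × Slot S := fun k => mcoll f (x k) (w k) with hcl
  -- origins
  let o : ℕ → Slot S → ℕ := fun k => Nat.rec (fun _ => 0)
    (fun k ok t => if t = (cl k).1 then k + 1 else ok t) k
  have ho0 : ∀ t, o 0 t = 0 := fun _ => rfl
  have hos : ∀ k t, o (k+1) t = if t = (cl k).1 then k + 1 else o k t := fun _ _ => rfl
  have hole : ∀ k t, o k t ≤ k := by
    intro k t
    induction k with
    | zero => simp [ho0]
    | succ k ih => rw [hos]; split_ifs <;> omega
  have hcllt : ∀ k, (cl k).2 < (cl k).1 := fun k => coll_lt _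
  have hozero : ∀ k, o k 0 = 0 := by
    intro k
    induction k with
    | zero => simp [ho0]
    | succ k ih =>
      rw [hos, if_neg, ih]
      intro h0
      have := hcllt k
      rw [← h0] at this
      exact absurd this (Fin.not_lt_zero _)
  have hval : ∀ k t, (x k).1 t = seg f s0 w (o k t) k := by
    intro k t
    induction k with
    | zero => rw [hx0]; rfl
    | succ k ih =>
      rw [hxs, hos]
      simp only [mstep, mval]
      by_cases ht : t = (cl k).1
      · rw [if_pos ht, if_pos ht, seg_le _ _ _ _ _ le_rfl]
      · rw [if_neg ht, if_neg ht, seg_succ _ _ _ _ _ (hole k t), ih]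
  have hsnap : ∀ k t u, (x k).2 t u = seg f s0 w (o (o k t) u) (o k t) := by
    intro k t u
    induction k with
    | zero => rw [hx0]; rfl
    | succ k ih =>
      rw [hos]
      by_cases ht : t = (cl k).1
      · rw [if_pos ht, ← hval (k+1) u, hxs]
        simp only [mstep]
        rw [if_pos ht]
      · rw [if_neg ht, ← ih, hxs]
        simp only [mstep]
        rw [if_neg ht]
  obtain ⟨t, t', hinf, hfin⟩ := h
  -- slot t is eventually not killed
  have hK : ∃ K, ∀ k, K ≤ k → (cl k).1 ≠ t := by
    have : ∀ r : Slot S × S × S, ∃ n, ∀ k, n ≤ k → mev f (x k) (w k) ≠ (t, r) := by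
      intro r
      have := hfin r
      simp only [Set.mem_ofPred_eq, not_forall, not_exists, not_and] at this
      exact this
    choose n hn using this
    obtain ⟨K, hK⟩ := (Set.finite_range n).bddAbove
    refine ⟨K, fun k hk hkt => ?_⟩
    refine hn (mev f (x k) (w k)).2 k (le_trans (hK ⟨_, rfl⟩) hk) ?_
    rw [← hkt]
    rfl
  obtain ⟨K, hK⟩ := hK
  have hop : ∀ k, K ≤ k → o k t = o K t := by
    intro k hk
    induction k, hk using Nat.le_induction with
    | base => rfl
    | succ k hk ih => rw [hos, if_neg (fun h => hK k hk h.symm), ih]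
  obtain ⟨κ, hκ, hκe⟩ := Filter.extraction_of_frequently_atTop
    (P := fun k => mev f (x k) (w k) = (t', t, s, e))
    (Filter.frequently_atTop.mpr (fun n => hinf n))
  have hev : ∀ m, (cl (κ m)).1 = t' ∧ (cl (κ m)).2 = t ∧ (x (κ m)).2 t' 0 = s ∧
      (x (κ m)).2 t' t = e := by
    intro m
    have := hκe m
    simp only [mev, Prod.mk.injEq] at this
    obtain ⟨h1, h2, h3, h4⟩ := this
    rw [h1] at h3 h4
    rw [h2] at h4
    exact ⟨h1, h2, h3, h4⟩
  have hogt : ∀ k k', k < k' → (cl k).1 = t' → k + 1 ≤ o k' t' := by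
    intro k k' hk hc
    induction k', Nat.succ_le_of_lt hk using Nat.le_induction with
    | base => rw [hos, if_pos hc.symm]
    | succ k' hk' ih =>
      rw [hos]
      have := ih hk'
      split_ifs <;> omega
  let J : ℕ → ℕ := fun m => o (κ (K + 1 + m)) t'
  have hJ1 : ∀ m, J m ≤ κ (K + 1 + m) := fun m => hole _ _
  have hJ2 : ∀ m, κ (K + m) + 1 ≤ J m := fun m =>
    hogt _ _ (hκ (by omega)) (hev _).1
  have hJK : ∀ m, K + 1 ≤ J m := by
    intro m
    have h1 := hJ2 m
    have h2 : K + m ≤ κ (K + m) := hκ.id_le _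
    omega
  have hJmono : ∀ m, κ (K + 1 + m) + 1 ≤ J (m+1) := by
    intro m
    have := hJ2 (m+1)
    rwa [show K + (m+1) = K + 1 + m by omega] at this
  have hcolm : ∀ m, seg f s0 w (J m) (κ (K+1+m) + 1) =
      seg f s0 w (o K t) (κ (K+1+m) + 1) := by
    intro m
    have h1 := coll_eq (fun t => f ((x (κ (K+1+m))).1 t) (w (κ (K+1+m))))
    change f ((x (κ (K+1+m))).1 (cl (κ (K+1+m))).2) _ =
      f ((x (κ (K+1+m))).1 (cl (κ (K+1+m))).1) _ at h1
    rw [(hev _).1, (hev _).2.1, hval, hval] at h1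
    have h3 : K ≤ κ (K+1+m) := by have := hJK m; have := hJ1 m; omega
    rw [seg_succ _ _ _ _ _ (hJ1 m), seg_succ _ _ _ _ _ (le_trans (hole K t) h3)]
    rw [hop _ h3] at h1
    exact h1.symm
  refine ⟨fun m => Nat.casesOn m 0 J, ?_, rfl, ?_, ?_⟩
  · refine strictMono_nat_of_lt_succ ?_
    intro m
    cases m with
    | zero => have := hJK 0; change 0 < J 0; omega
    | succ m => have := hJ1 m; have := hJmono m; change J m < J (m+1); omega
  · change seg f s0 w 0 (J 0) = s
    have := (hev (K+1+0)).2.2.1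
    rw [hsnap, hozero] at this
    exact this
  · intro m
    change seg f s0 w (J m) (J (m+1)) = e
    have h3 : K ≤ κ (K+1+m) := by have := hJK m; have := hJ1 m; omega
    rw [seg_merge f s0 w (J m) (o K t) (κ (K+1+m) + 1) (by have := hJ1 m; omega)
      (by have := hole K t; omega) (hcolm m) _ (hJmono m)]
    have h4 := (hev (K+1+(m+1))).2.2.2
    rw [hsnap, hop] at h4
    · exact h4
    · exact le_trans (by omega) (hJK (m+1))

/-! #### Path summaries -/

/-- Path summaries: source, set of visited states, target. -/
abbrev Summ (Q : Type) : Type := Set (Q × Set Q × Q)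

/-- Empty summary. -/
def summ0 (Q : Type) : Summ Q := {z | z.2.1 = ∅ ∧ z.1 = z.2.2}

/-- Extending a summary by a letter. -/
def summF {Q : Type} (s : Summ Q) (r : Q → Q → Prop) : Summ Q :=
  {z | ∃ C q', (z.1, C, q') ∈ s ∧ r q' z.2.2 ∧ z.2.1 = insert z.2.2 C}

theorem seg_summ {Q : Type} (w : ℕ → Q → Q → Prop) (i k : ℕ) (hik : i ≤ k) (q q' : Q)
    (C : Set Q) :
    (q, C, q') ∈ seg summF (summ0 Q) w i k ↔
      ∃ p : ℕ → Q, p i = q ∧ p k = q' ∧ (∀ l, i ≤ l → l < k → w l (p l) (p (l+1))) ∧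
        C = {a | ∃ l, i < l ∧ l ≤ k ∧ p l = a} := by
  classical
  induction k, hik using Nat.le_induction generalizing q' C with
  | base =>
    rw [seg_le _ _ _ _ _ le_rfl]
    constructor
    · rintro ⟨h1, h2⟩
      simp only at h1 h2
      subst h1 h2
      refine ⟨fun _ => q, rfl, rfl, fun l h1 h2 => by omega, ?_⟩
      ext a
      simp only [Set.mem_empty_iff_false, Set.mem_ofPred_eq, false_iff]
      rintro ⟨l, h1, h2, -⟩
      omega
    · rintro ⟨p, h1, h2, -, h3⟩
      refine ⟨?_, h1.symm.trans h2⟩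
      simp only
      rw [h3]
      ext a
      simp only [Set.mem_empty_iff_false, Set.mem_ofPred_eq, iff_false]
      rintro ⟨l, h1, h2, -⟩
      omega
  | succ k hk ih =>
    rw [seg_succ _ _ _ _ _ hk]
    constructor
    · rintro ⟨C', q'', h1, h2, h3⟩
      simp only at h1 h2 h3
      obtain ⟨p, g1, g2, g3, g4⟩ := (ih _ _).mp h1
      refine ⟨fun l => if l = k + 1 then q' else p l, ?_, ?_, ?_, ?_⟩
      · simp only; rw [if_neg (by omega), g1]
      · simp
      · intro l h4 h5
        simp only
        rw [if_neg (by omega)]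
        by_cases h6 : l = k
        · subst h6; rw [if_pos rfl, g2]; exact h2
        · rw [if_neg (by omega)]; exact g3 l h4 (by omega)
      · rw [h3, g4]
        ext a
        simp only [Set.mem_insert_iff, Set.mem_ofPred_eq]
        constructor
        · rintro (rfl | ⟨l, h5, h6, rfl⟩)
          · exact ⟨k+1, by omega, le_rfl, by simp⟩
          · exact ⟨l, h5, by omega, by rw [if_neg (by omega)]⟩
        · rintro ⟨l, h5, h6, h7⟩
          by_cases h8 : l = k + 1
          · rw [if_pos h8] at h7; exact Or.inl h7.symm
          · rw [if_neg h8] at h7; exact Or.inr ⟨l, h5, by omega, h7⟩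
    · rintro ⟨p, g1, g2, g3, g4⟩
      refine ⟨{a | ∃ l, i < l ∧ l ≤ k ∧ p l = a}, p k, (ih _ _).mpr
        ⟨p, g1, rfl, fun l h1 h2 => g3 l h1 (by omega), rfl⟩, ?_, ?_⟩
      · have := g3 k hk (by omega)
        rwa [g2] at this
      · simp only
        rw [g4]
        ext a
        simp only [Set.mem_insert_iff, Set.mem_ofPred_eq]
        constructor
        · rintro ⟨l, h5, h6, h7⟩
          by_cases h8 : l = k + 1
          · subst h8; exact Or.inl (by rw [← h7, g2])
          · exact Or.inr ⟨l, h5, by omega, h7⟩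
        · rintro (rfl | ⟨l, h5, h6, rfl⟩)
          · exact ⟨k+1, by omega, le_rfl, g2⟩
          · exact ⟨l, h5, by omega, rfl⟩

/-- All paths of the word from `q₀` satisfy the parity condition. -/
def GoodW {Q : Type} (c : Q → ℕ) (q₀ : Q) (w : ℕ → Q → Q → Prop) : Prop :=
  ∀ p : ℕ → Q, p 0 = q₀ → (∀ k, w k (p k) (p (k+1))) → SeqPar (fun k => c (p k))

theorem exists_block (j : ℕ → ℕ) (hj : StrictMono j) (h0 : j 0 = 0) (l : ℕ) :
    ∃ M, j M ≤ l ∧ l < j (M+1) := by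
  induction l with
  | zero => exact ⟨0, by omega, by have := hj (show 0 < 0 + 1 by omega); omega⟩
  | succ l ih =>
    obtain ⟨M, h1, h2⟩ := ih
    by_cases h : l + 1 < j (M+1)
    · exact ⟨M, by omega, h⟩
    · have := hj (show M + 1 < M + 1 + 1 by omega)
      exact ⟨M+1, by omega, by omega⟩

theorem block_unique (j : ℕ → ℕ) (hj : StrictMono j) (l M M' : ℕ) (h1 : j M ≤ l)
    (h2 : l < j (M+1)) (h3 : j M' ≤ l) (h4 : l < j (M'+1)) : M = M' := by
  have a := hj.lt_iff_lt.mp (lt_of_le_of_lt h1 h4)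
  have b := hj.lt_iff_lt.mp (lt_of_le_of_lt h3 h2)
  omega

theorem inf_transfer {Q : Type} (p p' : ℕ → Q) (j j' : ℕ → ℕ) (hj : StrictMono j)
    (hj' : StrictMono j') (h0 : j 0 = 0)
    (h : ∀ M, {a | ∃ l, j M < l ∧ l ≤ j (M+1) ∧ p l = a} =
      {a | ∃ l, j' M < l ∧ l ≤ j' (M+1) ∧ p' l = a})
    (R : Q → Prop) (hR : ∀ n, ∃ k, n ≤ k ∧ R (p k)) : ∀ n, ∃ k, n ≤ k ∧ R (p' k) := by
  intro n
  obtain ⟨k, hk, hRk⟩ := hR (j n + 1)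
  obtain ⟨M, h1, h2⟩ := exists_block j hj h0 (k - 1)
  have h3 : p k ∈ {a | ∃ l, j M < l ∧ l ≤ j (M+1) ∧ p l = a} := ⟨k, by omega, by omega, rfl⟩
  rw [h] at h3
  obtain ⟨l, h4, h5, h6⟩ := h3
  have h7 : n ≤ M := by
    have := hj.lt_iff_lt.mp (show j n < j (M+1) by omega)
    omega
  have h8 : M ≤ j' M := hj'.id_le M
  exact ⟨l, by omega, by rw [h6]; exact hRk⟩

theorem fact_good {Q : Type} (c : Q → ℕ) (q₀ : Q) (w w' : ℕ → Q → Q → Prop) (s e : Summ Q)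
    (hw : Fact summF (summ0 Q) w s e) (hw' : Fact summF (summ0 Q) w' s e)
    (hg : GoodW c q₀ w) : GoodW c q₀ w' := by
  classical
  obtain ⟨j, hj, hj0, hjs, hje⟩ := hw
  obtain ⟨j', hj', hj0', hjs', hje'⟩ := hw'
  intro p' hp0 hp'
  have hseg : ∀ M, seg summF (summ0 Q) w (j M) (j (M+1)) =
      seg summF (summ0 Q) w' (j' M) (j' (M+1)) := by
    intro M
    cases M with
    | zero => rw [hjs, hjs']
    | succ M => rw [hje, hje']
  have hex : ∀ M, ∃ h : ℕ → Q, h (j M) = p' (j' M) ∧ h (j (M+1)) = p' (j' (M+1)) ∧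
      (∀ l, j M ≤ l → l < j (M+1) → w l (h l) (h (l+1))) ∧
      {a | ∃ l, j' M < l ∧ l ≤ j' (M+1) ∧ p' l = a} =
        {a | ∃ l, j M < l ∧ l ≤ j (M+1) ∧ h l = a} := by
    intro M
    have h1 := (seg_summ w' (j' M) (j' (M+1)) (hj' (Nat.lt_succ_self M)).le (p' (j' M))
      (p' (j' (M+1))) {a | ∃ l, j' M < l ∧ l ≤ j' (M+1) ∧ p' l = a}).mpr
        ⟨p', rfl, rfl, fun l _ _ => hp' l, rfl⟩
    rw [← hseg] at h1
    exact (seg_summ w _ _ (hj (Nat.lt_succ_self M)).le _ _ _).mp h1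
  choose h hh1 hh2 hh3 hh4 using hex
  choose M hM1 hM2 using exists_block j hj hj0
  have hMu : ∀ l N, j N ≤ l → l < j (N+1) → M l = N := fun l N h1 h2 =>
    block_unique j hj l _ _ (hM1 l) (hM2 l) h1 h2
  let p : ℕ → Q := fun l => h (M l) l
  have hp : ∀ N l, j N ≤ l → l ≤ j (N+1) → p l = h N l := by
    intro N l h1 h2
    by_cases h3 : l = j (N+1)
    · have : M l = N + 1 := hMu l (N+1) h3.ge (by
        rw [h3]; exact hj (Nat.lt_succ_self _))
      simp only [p]
      rw [this, h3, hh1, hh2]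
    · have : M l = N := hMu l N h1 (by omega)
      simp only [p]
      rw [this]
  have hgood := hg p (by
      have := hp 0 0 (by omega) (by omega)
      rw [this]
      have := hh1 0
      rw [hj0, hj0', hp0] at this
      exact this) (by
      intro k
      rw [hp (M k) k (hM1 k) (hM2 k).le, hp (M k) (k+1) (by have := hM1 k; omega) (hM2 k)]
      exact hh3 _ _ (hM1 k) (hM2 k))
  have hvis : ∀ N, {a | ∃ l, j N < l ∧ l ≤ j (N+1) ∧ p l = a} =
      {a | ∃ l, j' N < l ∧ l ≤ j' (N+1) ∧ p' l = a} := by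
    intro N
    rw [hh4]
    ext a
    constructor
    · rintro ⟨l, h1, h2, h3⟩
      exact ⟨l, h1, h2, by rw [← hp N l h1.le h2]; exact h3⟩
    · rintro ⟨l, h1, h2, h3⟩
      exact ⟨l, h1, h2, by rw [hp N l h1.le h2]; exact h3⟩
  obtain ⟨m, hm, hinf, hfin⟩ := hgood
  refine ⟨m, hm, inf_transfer p p' j j' hj hj' hj0 hvis (fun q => c q = m) hinf, ?_⟩
  by_contra hcon
  push Not at hcon
  have := inf_transfer p' p j' j hj' hj hj0' (fun N => (hvis N).symm) (fun q => c q < m) hcon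
  obtain ⟨n, hn⟩ := hfin
  obtain ⟨k, hk, hk2⟩ := this n
  have := hn k hk
  simp only at this
  omega

/-- Deterministic parity word automaton for `GoodW`. -/
theorem exists_det {Q : Type} [Finite Q] (c : Q → ℕ) (q₀ : Q) :
    ∃ (Y : Type) (_ : Finite Y) (y0 : Y) (st : Y → (Q → Q → Prop) → Y) (col : Y → ℕ),
      ∀ w, SeqPar (fun k => col (runD st y0 w k)) ↔ GoodW c q₀ w := by
  classical
  let S := Summ Q
  let Acc : Set (MEv S) → Prop := fun I => ∃ s e, MTy I s e ∧ ∃ w,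
    Fact summF (summ0 Q) w s e ∧ GoodW c q₀ w
  let x0 : MSt S := (fun _ => summ0 Q, fun _ _ => summ0 Q)
  let m0 : (MEv S → Set (MEv S)) × Set (MEv S) := (fun _ => ∅, ∅)
  refine ⟨MSt S × ((MEv S → Set (MEv S)) × Set (MEv S)), inferInstance, (x0, m0),
    fun y a => (mstep summF (summ0 Q) y.1 a, larStep y.2 (mev summF y.1 a)),
    fun y => larCol Acc y.2, fun w => ?_⟩
  set x := runD (mstep summF (summ0 Q)) x0 w with hx
  have hrun : ∀ k, runD (fun (y : MSt S × ((MEv S → Set (MEv S)) × Set (MEv S))) a =>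
      (mstep summF (summ0 Q) y.1 a, larStep y.2 (mev summF y.1 a))) (x0, m0) w k =
      (x k, runD larStep m0 (fun k => mev summF (x k) (w k)) k) := by
    intro k
    induction k with
    | zero => rfl
    | succ k ih => simp only [runD, ih, hx]
  simp only [hrun]
  rw [lar_correct Acc (fun k => mev summF (x k) (w k))]
  constructor
  · rintro ⟨s, e, hty, w', hf, hg⟩
    exact fact_good c q₀ w' w s e hf (mty_fact summF (summ0 Q) w s e x hx hty) hg
  · intro hg
    obtain ⟨s, e, hty⟩ := mty_exists (fun k => mev summF (x k) (w k)) (fun k => coll_lt _)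
    exact ⟨s, e, hty, w, mty_fact summF (summ0 Q) w s e x hx hty, hg⟩

/-! #### Acceptance via sequences -/

/-- Prefixes of a branch. -/
def pre {D : Type*} (d : ℕ → D) : ℕ → List D
  | 0 => []
  | k + 1 => pre d k ++ [d k]

theorem pre_length {D : Type*} (d : ℕ → D) (k : ℕ) : (pre d k).length = k := by
  induction k with
  | zero => rfl
  | succ k ih => simp [pre, ih]

theorem pre_prefix {D : Type*} (d : ℕ → D) (k l : ℕ) (h : k ≤ l) : pre d k <+: pre d l := by
  induction l, h using Nat.le_induction with
  | base => exact List.prefix_rfl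
  | succ l hl ih => exact ih.trans (List.prefix_append _ _)

/-- Sequence version of acceptance. -/
def SeqAcc {D Q A : Type*} (δ : Q × A → Set (Set (D × Q))) (c : Q → ℕ) (q₀ : Q)
    (F : List D → A) : Prop :=
  ∃ g : List D → Q → Set (D × Q), (∀ x q, g x q ∈ δ (q, F x)) ∧
    ∀ (d : ℕ → D) (q : ℕ → Q), q 0 = q₀ → (∀ k, (d k, q (k+1)) ∈ g (pre d k) (q k)) →
      SeqPar (fun k => c (q k))

/-- Depth of a game position. -/
def dep {D P O : Type*} (u : List D × (P ⊕ O)) : ℕ :=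
  2 * u.1.length + Sum.elim (fun _ => 0) (fun _ => 1) u.2

theorem edge_dep {D P O : Type*} {eP : List D × P → Set O} {eO : List D × O → Set (D × P)}
    {u v : List D × (P ⊕ O)} (h : Edge eP eO u v) : dep v = dep u + 1 := by
  rcases h with ⟨x, k, l, rfl, rfl, -⟩ | ⟨x, l, d, k, rfl, rfl, -⟩
  · simp [dep]
  · simp [dep]; omega

theorem trans_dep {D P O : Type*} {eP : List D × P → Set O} {eO : List D × O → Set (D × P)}
    {u v : List D × (P ⊕ O)} (h : Relation.TransGen (Edge eP eO) u v) : dep u < dep v := by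
  induction h with
  | single h => have := edge_dep h; omega
  | tail _ h ih => have := edge_dep h; omega

/-- Positions of the play given by a branch and a state sequence. -/
def pos {D P O : Type*} (d : ℕ → D) (q : ℕ → P) (o : ℕ → O) (n : ℕ) : List D × (P ⊕ O) :=
  if n % 2 = 0 then (pre d (n / 2), Sum.inl (q (n / 2))) else (pre d (n / 2), Sum.inr (o (n / 2)))

theorem pos_even {D P O : Type*} (d : ℕ → D) (q : ℕ → P) (o : ℕ → O) (k : ℕ) :
    pos d q o (2 * k) = (pre d k, Sum.inl (q k)) := by
  simp [pos]

theorem pos_odd {D P O : Type*} (d : ℕ → D) (q : ℕ → P) (o : ℕ → O) (k : ℕ) :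
    pos d q o (2 * k + 1) = (pre d k, Sum.inr (o k)) := by
  have h1 : (2 * k + 1) % 2 = 1 := by omega
  have h2 : (2 * k + 1) / 2 = k := by omega
  simp [pos, h1, h2]

theorem pos_fst {D P O : Type*} (d : ℕ → D) (q : ℕ → P) (o : ℕ → O) (n : ℕ) :
    (pos d q o n).1 = pre d (n / 2) := by
  unfold pos; split_ifs <;> rfl

theorem pos_glt {D P O : Type*} (d : ℕ → D) (q : ℕ → P) (o : ℕ → O) (n n' : ℕ) :
    Glt (pos d q o n) (pos d q o n') ↔ n < n' := by
  have hd : ∀ n, dep (pos d q o n) = n := by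
    intro n
    rcases Nat.even_or_odd' n with ⟨k, rfl | rfl⟩
    · rw [pos_even]; simp [dep, pre_length]
    · rw [pos_odd]; simp [dep, pre_length]
  constructor
  · intro h
    have : dep (pos d q o n) < dep (pos d q o n') := by
      rcases h with ⟨h1, h2⟩ | ⟨h1, ⟨a, h2⟩, ⟨b, h3⟩⟩
      · have : (pos d q o n).1.length < (pos d q o n').1.length := by
          refine lt_of_le_of_ne h1.length_le fun h => h2 (h1.eq_of_length h)
        unfold dep
        have : Sum.elim (fun _ => 0) (fun _ => 1) (pos d q o n).2 ≤ 1 := by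
          cases (pos d q o n).2 <;> simp
        omega
      · simp [dep, h1, h2, h3]
    rwa [hd, hd] at this
  · intro h
    by_cases h2 : n / 2 < n' / 2
    · left
      rw [pos_fst, pos_fst]
      refine ⟨pre_prefix _ _ _ h2.le, fun h3 => ?_⟩
      have := congrArg List.length h3
      rw [pre_length, pre_length] at this
      omega
    · right
      obtain ⟨k, rfl⟩ : ∃ k, n = 2 * k := ⟨n / 2, by omega⟩
      obtain rfl : n' = 2 * k + 1 := by omega
      rw [pos_even, pos_odd]
      exact ⟨rfl, ⟨_, rfl⟩, ⟨_, rfl⟩⟩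

theorem par_range {D Q : Type*} (c : Q → ℕ) (d : ℕ → D) (q : ℕ → Q) (o : ℕ → Q × Set (D × Q))
    (ho : ∀ k, (o k).1 = q k) :
    Par c (Set.range (pos d q o)) ↔ SeqPar (fun k => c (q k)) := by
  have hc : ∀ n, HatC c (pos d q o n) = c (q (n / 2)) := by
    intro n
    unfold pos HatC
    split_ifs <;> simp [ho]
  constructor
  · rintro ⟨m, hm, h1, u, ⟨n, rfl⟩, h2⟩
    refine ⟨m, hm, fun N => ?_, n + 1, fun k hk => ?_⟩
    · obtain ⟨_, ⟨n', rfl⟩, h3, h4⟩ := h1 _ ⟨2 * N, rfl⟩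
      rw [pos_glt] at h3
      rw [hc] at h4
      exact ⟨n' / 2, by omega, h4⟩
    · have := h2 _ ⟨2 * k, rfl⟩ ((pos_glt _ _ _ _ _).mpr (by omega))
      rw [hc, show 2 * k / 2 = k by omega] at this
      exact this
  · rintro ⟨m, hm, h1, n, h2⟩
    refine ⟨m, hm, ?_, _, ⟨2 * n, rfl⟩, ?_⟩
    · rintro _ ⟨N, rfl⟩
      obtain ⟨k, hk, hk2⟩ := h1 (N + 1)
      refine ⟨_, ⟨2 * k, rfl⟩, (pos_glt _ _ _ _ _).mpr (by omega), ?_⟩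
      rw [hc, show 2 * k / 2 = k by omega]
      exact hk2
    · rintro _ ⟨N, rfl⟩ h
      rw [pos_glt] at h
      rw [hc]
      exact h2 _ (by omega)

theorem play_of_seq {α : Type*} (r : α → α → Prop) (u : ℕ → α) (h : ∀ n, r (u n) (u (n+1))) :
    IsPlay r (u 0) (Set.range u) := by
  have ht : ∀ n n', n < n' → Relation.TransGen r (u n) (u n') := by
    intro n n' hn
    induction n', Nat.succ_le_of_lt hn using Nat.le_induction with
    | base => exact Relation.TransGen.single (h n)
    | succ k hk ih => exact Relation.TransGen.tail (ih hk) (h k)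
  refine ⟨⟨0, rfl⟩, ?_, ?_, ?_⟩
  · rintro _ ⟨n, rfl⟩
    rcases Nat.eq_zero_or_pos n with rfl | hn
    · exact Relation.ReflTransGen.refl
    · exact (ht 0 n hn).to_reflTransGen
  · rintro _ ⟨n, rfl⟩
    exact ⟨_, ⟨n+1, rfl⟩, h n⟩
  · rintro _ ⟨n, rfl⟩ _ ⟨n', rfl⟩
    rcases lt_trichotomy n n' with h | h | h
    · exact Or.inl (ht _ _ h)
    · exact Or.inr (Or.inl (by rw [h]))
    · exact Or.inr (Or.inr (ht _ _ h))

theorem seq_of_play {D P O : Type*} {eP : List D × P → Set O} {eO : List D × O → Set (D × P)}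
    {u₀ : List D × (P ⊕ O)} {U : Set (List D × (P ⊕ O))} (hU : IsPlay (Edge eP eO) u₀ U)
    (h0 : dep u₀ = 0) :
    ∃ u : ℕ → List D × (P ⊕ O), u 0 = u₀ ∧ (∀ n, Edge eP eO (u n) (u (n+1))) ∧
      U = Set.range u := by
  obtain ⟨hu0, -, hs, hc⟩ := hU
  choose! nx hnx1 hnx2 using hs
  let u : ℕ → List D × (P ⊕ O) := fun n => nx^[n] u₀
  have hus : ∀ n, u (n+1) = nx (u n) := fun n => Function.iterate_succ_apply' _ _ _
  have huU : ∀ n, u n ∈ U := by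
    intro n
    induction n with
    | zero => exact hu0
    | succ n ih => rw [hus]; exact hnx1 _ ih
  have hue : ∀ n, Edge eP eO (u n) (u (n+1)) := fun n => by rw [hus]; exact hnx2 _ (huU n)
  have hud : ∀ n, dep (u n) = n := by
    intro n
    induction n with
    | zero => exact h0
    | succ n ih => rw [edge_dep (hue n), ih]
  refine ⟨u, rfl, hue, Set.Subset.antisymm ?_ ?_⟩
  · intro v hv
    refine ⟨dep v, ?_⟩
    rcases hc v hv (u (dep v)) (huU _) with h | h | h
    · have := trans_dep h; rw [hud] at this; omega
    · exact h.symm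
    · have := trans_dep h; rw [hud] at this; omega
  · rintro _ ⟨n, rfl⟩
    exact huU n

theorem accepts_iff {D Q A : Type*} (δ : Q × A → Set (Set (D × Q))) (c : Q → ℕ) (q₀ : Q)
    (F : List D → A) : Accepts δ c q₀ F ↔ SeqAcc δ c q₀ F := by
  constructor
  · rintro ⟨σ, hσ, hwin⟩
    refine ⟨fun x q => (σ (x, q)).2, fun x q => (hσ (x, q)).2, fun d q hq0 hq => ?_⟩
    let o : ℕ → Q × Set (D × Q) := fun k => σ (pre d k, q k)
    have ho : ∀ k, (o k).1 = q k := fun k => (hσ (pre d k, q k)).1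
    rw [← par_range c d q o ho]
    apply hwin
    have hst : pos d q o 0 = ([], Sum.inl q₀) := by
      have := pos_even d q o 0
      rw [hq0] at this
      exact this
    rw [← hst]
    apply play_of_seq
    intro n
    rcases Nat.even_or_odd' n with ⟨k, rfl | rfl⟩
    · rw [pos_even, pos_odd]
      exact Or.inl ⟨_, _, _, rfl, rfl, rfl⟩
    · rw [pos_odd, show 2 * k + 1 + 1 = 2 * (k + 1) by ring, pos_even]
      exact Or.inr ⟨_, _, _, _, rfl, rfl, hq k⟩
  · rintro ⟨g, hg, hwin⟩
    refine ⟨fun p => (p.2, g p.1 p.2), fun p => ⟨rfl, hg _ _⟩, fun U hU => ?_⟩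
    obtain ⟨u, hu0, hue, rfl⟩ := seq_of_play hU (by simp [dep])
    -- step by two
    have hstep : ∀ k x q, u (2 * k) = (x, Sum.inl q) →
        u (2 * k + 1) = (x, Sum.inr (q, g x q)) ∧
        ∃ d q', (d, q') ∈ g x q ∧ u (2 * (k+1)) = (x ++ [d], Sum.inl q') := by
      intro k x q h
      have h1 : u (2 * k + 1) = (x, Sum.inr (q, g x q)) := by
        rcases hue (2 * k) with ⟨x', k', l, e1, e2, e3⟩ | ⟨x', l, d, k', e1, e2, e3⟩
        · rw [h] at e1
          simp only [Prod.mk.injEq, Sum.inl.injEq] at e1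
          obtain ⟨rfl, rfl⟩ := e1
          rw [e2]
          simp only [Set.mem_singleton_iff] at e3
          rw [e3]
        · rw [h] at e1
          simp at e1
      refine ⟨h1, ?_⟩
      rcases hue (2 * k + 1) with ⟨x', k', l, e1, e2, e3⟩ | ⟨x', l, d, k', e1, e2, e3⟩
      · rw [h1] at e1
        simp at e1
      · rw [h1] at e1
        simp only [Prod.mk.injEq, Sum.inr.injEq] at e1
        obtain ⟨rfl, rfl⟩ := e1
        exact ⟨d, k', e3, e2⟩
    have hev : ∀ k, ∃ x q, u (2 * k) = (x, Sum.inl q) := by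
      intro k
      induction k with
      | zero => exact ⟨_, _, hu0⟩
      | succ k ih =>
        obtain ⟨x, q, h⟩ := ih
        obtain ⟨-, d, q', -, h2⟩ := hstep k x q h
        exact ⟨_, _, h2⟩
    choose x q hxq using hev
    have hx : ∀ k, ∃ d, x (k+1) = x k ++ [d] ∧ (d, q (k+1)) ∈ g (x k) (q k) := by
      intro k
      obtain ⟨-, d, q', h1, h2⟩ := hstep k _ _ (hxq k)
      rw [hxq] at h2
      simp only [Prod.mk.injEq, Sum.inl.injEq] at h2
      obtain ⟨h3, h4⟩ := h2
      exact ⟨d, h3, by rw [h4]; exact h1⟩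
    choose d hd1 hd2 using hx
    have h00 : x 0 = [] ∧ q 0 = q₀ := by
      have := hxq 0
      rw [Nat.mul_zero, hu0] at this
      simp only [Prod.mk.injEq, Sum.inl.injEq] at this
      exact ⟨this.1.symm, this.2.symm⟩
    have hpre : ∀ k, x k = pre d k := by
      intro k
      induction k with
      | zero => exact h00.1
      | succ k ih => rw [hd1, ih]; rfl
    have hupos : u = pos d q (fun k => (q k, g (pre d k) (q k))) := by
      funext n
      rcases Nat.even_or_odd' n with ⟨k, rfl | rfl⟩
      · rw [pos_even, hxq, hpre]
      · rw [pos_odd, (hstep k _ _ (hxq k)).1, hpre]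
    rw [hupos, par_range c d q (fun k => (q k, g (pre d k) (q k))) (fun k => rfl)]
    exact hwin d q h00.2 (fun k => by rw [← hpre]; exact hd2 k)

theorem simulation {Alph : Type*} {Q : Type} [Fintype D] [Nonempty D]
    [Fintype Alph] [Nonempty Alph] [Fintype Q] [Nonempty Q]
    (δ : Q × Alph → Set (Set (D × Q))) (c : Q → ℕ) (q₀ : Q) (hA : AutWF δ) :
    ∃ (Q' : Type) (_ : Fintype Q') (_ : Nonempty Q')
      (δ' : Q' × Alph → Set (Set (D × Q'))) (c' : Q' → ℕ) (q₀' : Q'),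
      AutWF δ' ∧ NonDet δ' ∧
      ∀ F : List D → Alph, Accepts δ' c' q₀' F ↔ Accepts δ c q₀ F := by
  classical
  obtain ⟨Y, hY, y0, st, col, hdet⟩ := exists_det c q₀
  let rel : (Q → Set (D × Q)) → D → Q → Q → Prop := fun g d q1 q2 => (d, q2) ∈ g q1
  let conj : Y → (Q → Set (D × Q)) → Set (D × Y) := fun y g => {z | z.2 = st y (rel g z.1)}
  refine ⟨Y, Fintype.ofFinite Y, ⟨y0⟩,
    fun p => {C | ∃ g : Q → Set (D × Q), (∀ q, g q ∈ δ (q, p.2)) ∧ C = conj p.1 g},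
    col, y0, ?_, ?_, ?_⟩
  · intro y a
    refine ⟨⟨_, fun q => (hA q a).1.some, fun q => (hA q a).1.some_mem, rfl⟩, ?_⟩
    rintro _ ⟨g, -, rfl⟩
    exact ⟨(Classical.arbitrary D, st y (rel g (Classical.arbitrary D))),
      show st y (rel g (Classical.arbitrary D)) = st y (rel g (Classical.arbitrary D)) from rfl⟩
  · rintro y a _ ⟨g, -, rfl⟩ d y1 y2 h1 h2
    exact Eq.trans h1 (Eq.symm h2)
  · intro F
    rw [accepts_iff, accepts_iff]
    constructor
    · rintro ⟨G, hG, hwin⟩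
      choose g hg1 hg2 using hG
      -- the run of the automaton on the tree, computed on reversed words
      let ρ : List D → Y := fun x => List.rec (motive := fun _ => Y) y0
        (fun d x' y => st y (rel (g x'.reverse y) d)) x.reverse
      have hρ0 : ρ [] = y0 := rfl
      have hρs : ∀ x d, ρ (x ++ [d]) = st (ρ x) (rel (g x (ρ x)) d) := by
        intro x d
        simp only [ρ, List.reverse_append, List.reverse_cons, List.reverse_nil, List.nil_append,
          List.singleton_append, List.reverse_reverse]
      refine ⟨fun x q => g x (ρ x) q, fun x q => hg1 x (ρ x) q, fun d q hq0 hq => ?_⟩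
      let w : ℕ → Q → Q → Prop := fun k => rel (g (pre d k) (ρ (pre d k))) (d k)
      have hrun : ∀ k, runD st y0 w k = ρ (pre d k) := by
        intro k
        induction k with
        | zero => rfl
        | succ k ih =>
          change st (runD st y0 w k) (w k) = ρ (pre d k ++ [d k])
          rw [hρs, ih]
      have hgood : GoodW c q₀ w := by
        rw [← hdet]
        refine hwin d (fun k => runD st y0 w k) rfl (fun k => ?_)
        rw [hg2]
        change st (runD st y0 w k) (w k) = st (runD st y0 w k) _
        rw [hrun]
      exact hgood q hq0 hq
    · rintro ⟨g, hg, hwin⟩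
      refine ⟨fun x y => conj y (g x), fun x y => ⟨g x, hg x, rfl⟩, fun d y hy0 hy => ?_⟩
      let w : ℕ → Q → Q → Prop := fun k => rel (g (pre d k)) (d k)
      have hrun : ∀ k, y k = runD st y0 w k := by
        intro k
        induction k with
        | zero => exact hy0
        | succ k ih =>
          have : y (k+1) = st (y k) (w k) := hy k
          rw [this, ih]
          rfl
      simp only [hrun]
      rw [hdet]
      intro p hp0 hp
      exact hwin d p hp0 hp

end TreeGames
end
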